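/- arXiv:2403.00680 — 3 statements merged into one kernel-verified Lean document; each statement's English description precedes it below -/
import Mathlib

section
/- Let n, m ≥ 3 be integers. There is an absolute constant C > 0 with the following property. Let β_1, …, β_n ∈ ℝ² and Y ∈ {−1,1}^{m×n}, and for each i ∈ [m] let X_{(i)} ∈ ℝ^{n×2} be the matrix with rows −Y_{ij}·β_jᵀ (j ∈ [n]). Let μ ≥ 1 and ε ∈ (0,1/2), and assume each X_{(i)} is μ-complex in the ℓ₁ sense. Then there exists a weight vector w ∈ ℝ^n with nonnegative entries whose support has size at most C·(μ³/ε⁴)·((log n)⁴·(log log n)⁴ + log m), such that for every i ∈ [m] and every η ∈ ℝ²: |∑_{j=1}^n w_j·ln(1+exp(−Y_{ij}·(β_j·η))) − ∑_{j=1}^n ln(1+exp(−Y_{ij}·(β_j·η)))| ≤ ε·∑_{j=1}^n ln(1+exp(−Y_{ij}·(β_j·η))). In other words, the reweighted subset indexed by the support of w is a (1+ε)-coreset simultaneously for all m instances of the 2PL logistic objective. -/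
/-!
Write `t j = β j ⬝ᵥ η` and `f i` for the `i`-th objective. Complexity gives
`n + ‖t‖₁ ≤ 6 μ f i`, so it suffices to preserve every `f i` up to an additive error
`O((n + ‖t‖₁) / K)` with `K` of order `μ / ε`.

The vectors `t` form a space of dimension at most `d`, and an Auerbach basis of it for the `ℓ¹` norm
writes `t = ∑ k, a k • u k` with `‖u k‖₁ = 1` and `|a k| ≤ ‖t‖₁`. Sampling the index `j` with
probability proportional to `∑ k, |u k j| + 1 / n` makes the loss at `j`, relative to `n + ‖a‖₁`, a
bounded random variable up to the factor `d + 1`, and by Hoeffding's inequality `O(K² log N)`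
samples preserve `N` prescribed sums. They are taken for the `m` objectives at the
`(2 K² + 1) ^ d` points `a` of a grid of mesh `n / K` in the box of radius `n K`. This controls all
`a` in the box because the logistic loss is Lipschitz, and all `a` outside it because that loss is
within a constant of a positively homogeneous function. Hence `O((μ / ε)² log (m μ / ε))` samples
suffice for fixed `d`.
-/

open Finset Matrix

/-- A collection of rows `x` is `μ`-complex in the ℓ₁ sense:
for every `η`, the ℓ₁ mass of the nonnegative entries of `Xη` is at most
`μ` times the ℓ₁ mass of the negative entries. -/
def Mu1Complex {ι : Type} [Fintype ι] {d : ℕ} (x : ι → Fin d → ℝ) (μ : ℝ) : Prop :=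
  ∀ η : Fin d → ℝ,
    ∑ i ∈ Finset.univ.filter (fun i => 0 ≤ x i ⬝ᵥ η), x i ⬝ᵥ η ≤
      μ * ∑ i ∈ Finset.univ.filter (fun i => x i ⬝ᵥ η < 0), |x i ⬝ᵥ η|

section Auerbach

open Module

lemma exists_isMaxOn_abs_det {V κ : Type*} [NormedAddCommGroup V] [NormedSpace ℝ V] [Fintype κ]
    [DecidableEq κ] (e : Basis κ ℝ V) :
    ∃ v : κ → V, (∀ k, ‖v k‖ ≤ 1) ∧ 0 < |e.det v| ∧
      ∀ v', (∀ k, ‖v' k‖ ≤ 1) → |e.det v'| ≤ |e.det v| := by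
  have : FiniteDimensional ℝ V := .of_basis e
  have det_continuous : Continuous e.det := by
    have hrepr : ∀ k, Continuous fun x => e.repr x k := fun k =>
      (e.coord k).continuous_of_finiteDimensional
    exact Continuous.matrix_det <| continuous_pi fun i => continuous_pi fun k =>
      (hrepr i).comp (continuous_apply k)
  obtain ⟨v, hv, hmax⟩ : ∃ v ∈ Set.univ.pi fun _ : κ => Metric.closedBall (0 : V) 1,
      ∀ v' ∈ Set.univ.pi fun _ => Metric.closedBall 0 1, |e.det v'| ≤ |e.det v| :=
    (isCompact_univ_pi fun _ => isCompact_closedBall 0 1).exists_isMaxOn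
      ⟨0, by simp⟩ det_continuous.abs.continuousOn
  simp only [Set.mem_univ_pi, mem_closedBall_zero_iff] at hv hmax
  refine ⟨v, hv, lt_of_lt_of_le (abs_pos.2 ?_) (hmax (fun k => ‖e k‖⁻¹ • e k) fun k => ?_), hmax⟩
  · rw [AlternatingMap.map_smul_univ, e.det_self, smul_eq_mul, mul_one]
    exact prod_ne_zero_iff.2 fun k _ => inv_ne_zero (norm_ne_zero_iff.2 (e.ne_zero k))
  · exact (norm_smul_inv_norm (𝕜 := ℝ) (e.ne_zero k)).le

-- If the vectors `v` maximize `|det|` over the unit ball, replacing `v k` by `x` multiplies the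
-- determinant by the `k`-th coordinate of `x`, which is therefore at most `1` in absolute value.
theorem exists_auerbach_basis (V : Type*) [NormedAddCommGroup V] [NormedSpace ℝ V]
    [FiniteDimensional ℝ V] :
    ∃ b : Basis (Fin (finrank ℝ V)) ℝ V, (∀ k, ‖b k‖ = 1) ∧ ∀ x k, |b.repr x k| ≤ ‖x‖ := by
  let e := finBasis ℝ V
  obtain ⟨v, hv, hdet, hmax⟩ := exists_isMaxOn_abs_det e
  obtain ⟨hli, hspan⟩ := e.is_basis_iff_det.2 (abs_pos.1 hdet).isUnit
  let b := Basis.mk hli hspan.ge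
  have det_mul_repr : ∀ x k, e.det v * b.repr x k = e.det (Function.update v k x) := fun x k =>
    LinearMap.congr_fun (e.det_smul_mk_coord_eq_det_update hli hspan.ge k) x
  have repr_le_one : ∀ x k, ‖x‖ ≤ 1 → |b.repr x k| ≤ 1 := fun x k hx => by
    refine le_of_mul_le_mul_left ?_ hdet
    rw [← abs_mul, det_mul_repr, mul_one]
    refine hmax _ fun i => ?_
    obtain rfl | hik := eq_or_ne i k
    · simpa using hx
    · simpa [hik] using hv i
  have repr_le : ∀ x k, |b.repr x k| ≤ ‖x‖ := fun x k => by
    obtain rfl | hx := eq_or_ne x 0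
    · simp
    · have h := repr_le_one (‖x‖⁻¹ • x) k (norm_smul_inv_norm (𝕜 := ℝ) hx).le
      rwa [map_smul, Finsupp.smul_apply, smul_eq_mul, abs_mul, abs_inv, abs_norm,
        inv_mul_le_one₀ (norm_pos_iff.2 hx)] at h
  refine ⟨b, fun k => le_antisymm ?_ ?_, repr_le⟩
  · simpa [b] using hv k
  · simpa using repr_le (b k) k

theorem exists_l1_auerbach_family {ι : Type*} [Fintype ι] (T : Submodule ℝ (ι → ℝ)) :
    ∃ u : Fin (finrank ℝ T) → ι → ℝ, (∀ k, ∑ j, |u k j| = 1) ∧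
      ∀ t ∈ T, ∃ a : Fin (finrank ℝ T) → ℝ,
        t = ∑ k, a k • u k ∧ ∀ k, |a k| ≤ ∑ j, |t j| := by
  let E := (WithLp.linearEquiv 1 ℝ (ι → ℝ)).symm
  let T₁ : Submodule ℝ (PiLp 1 fun _ : ι => ℝ) := T.map E.toLinearMap
  have hrank : finrank ℝ T₁ = finrank ℝ T := E.finrank_map_eq T
  obtain ⟨b, hb, hrepr⟩ := exists_auerbach_basis T₁
  let b' := b.reindex (finCongr hrank)
  have l1_norm : ∀ x : T₁, ‖x‖ = ∑ j, |(x : PiLp 1 fun _ : ι => ℝ) j| := fun x =>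
    PiLp.norm_eq_of_L1 _
  refine ⟨fun k => E.symm (b' k), fun k => ?_, fun t ht => ?_⟩
  · simpa [b', hb, E] using (l1_norm (b' k)).symm
  · let x : T₁ := ⟨E t, Submodule.mem_map_of_mem ht⟩
    refine ⟨b'.repr x, ?_, fun k => ?_⟩
    · have hx := congrArg (fun x : T₁ => E.symm x) (b'.sum_repr x)
      simp only [AddSubmonoidClass.coe_finsetSum, SetLike.val_smul, map_sum, map_smul] at hx
      exact (hx.trans (E.symm_apply_apply t)).symm
    · simpa [b', x, l1_norm, E] using hrepr x ((finCongr hrank).symm k)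

end Auerbach

section Sampling

open MeasureTheory ProbabilityTheory

variable {Ω : Type*} [MeasurableSpace Ω] (P : Measure Ω) [IsProbabilityMeasure P]

lemma measureReal_pi_le_sum_sub_integral {X : Ω → ℝ} (hX : Measurable X) (hX1 : ∀ x, |X x| ≤ 1)
    (k : ℕ) {δ : ℝ} (hδ : 0 ≤ δ) :
    (Measure.pi fun _ : Fin k => P).real {ω | k * δ ≤ ∑ i, (X (ω i) - ∫ x, X x ∂P)} ≤
      Real.exp (-(k * δ ^ 2 / 2)) := by
  set Z : Ω → ℝ := fun x => X x - ∫ x, X x ∂P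
  have hZ : HasSubgaussianMGF Z ((‖(1 : ℝ) - -1‖₊ / 2) ^ 2) P :=
    hasSubgaussianMGF_of_mem_Icc hX.aemeasurable (.of_forall fun x => abs_le.1 (hX1 x))
  have hindep : iIndepFun (fun (i : Fin k) ω => Z (ω i)) (Measure.pi fun _ => P) :=
    iIndepFun_pi (X := fun _ => Z) fun _ => by fun_prop
  have hZ_eval : ∀ i ∈ (univ : Finset (Fin k)), HasSubgaussianMGF
      (fun ω : Fin k → Ω => Z (ω i)) ((‖(1 : ℝ) - -1‖₊ / 2) ^ 2) (Measure.pi fun _ => P) :=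
    fun i _ => .of_map (measurable_pi_apply i).aemeasurable
      (by rwa [(measurePreserving_eval (fun _ => P) i).map_eq])
  refine (HasSubgaussianMGF.measure_sum_ge_le_of_iIndepFun hindep hZ_eval
    (by positivity)).trans_eq ?_
  have hparam : ((∑ _i : Fin k, (‖(1 : ℝ) - -1‖₊ / 2) ^ 2 : NNReal) : ℝ) = k := by
    norm_num
  push_cast at hparam ⊢
  rw [hparam]
  congr 1
  obtain hk | hk := eq_or_ne (k : ℝ) 0
  · simp [hk]
  · field_simp

lemma measureReal_pi_le_abs_sum_sub_integral {X : Ω → ℝ} (hX : Measurable X)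
    (hX1 : ∀ x, |X x| ≤ 1) (k : ℕ) {δ : ℝ} (hδ : 0 ≤ δ) :
    (Measure.pi fun _ : Fin k => P).real {ω | k * δ ≤ |∑ i, (X (ω i) - ∫ x, X x ∂P)|} ≤
      2 * Real.exp (-(k * δ ^ 2 / 2)) := by
  have hupper := measureReal_pi_le_sum_sub_integral P hX hX1 k hδ
  have hlower := measureReal_pi_le_sum_sub_integral P hX.neg (by simpa using hX1) k hδ
  simp only [Pi.neg_apply, integral_neg, ← neg_sub', sum_neg_distrib] at hlower
  simp only [le_abs, Set.ofPred_or, two_mul]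
  exact (measureReal_union_le _ _).trans (add_le_add hupper hlower)

theorem exists_sample_forall_abs_sum_sub_integral_lt {L : Type*} [Fintype L] {X : L → Ω → ℝ}
    (hX : ∀ l, Measurable (X l)) (hX1 : ∀ l x, |X l x| ≤ 1) {k : ℕ} {δ : ℝ} (hδ : 0 ≤ δ)
    (hk : Real.log (2 * Fintype.card L) < k * δ ^ 2 / 2) :
    ∃ ω : Fin k → Ω, ∀ l, |∑ i, (X l (ω i) - ∫ x, X l x ∂P)| < k * δ := by
  let bad (l : L) : Set (Fin k → Ω) := {ω | k * δ ≤ |∑ i, (X l (ω i) - ∫ x, X l x ∂P)|}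
  suffices (Measure.pi fun _ => P).real (⋃ l, bad l) < 1 by
    by_contra! h
    have hcover : ⋃ l, bad l = Set.univ := Set.eq_univ_of_forall fun ω => by
      simpa [bad] using h ω
    simp [hcover] at this
  calc (Measure.pi fun _ => P).real (⋃ l, bad l)
      ≤ ∑ l, (Measure.pi fun _ => P).real (bad l) := measureReal_iUnion_fintype_le _
    _ ≤ ∑ _l : L, 2 * Real.exp (-(k * δ ^ 2 / 2)) := sum_le_sum fun l _ =>
        measureReal_pi_le_abs_sum_sub_integral P (hX l) (hX1 l) k hδ
    _ = 2 * Fintype.card L * Real.exp (-(k * δ ^ 2 / 2)) := by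
        rw [sum_const, card_univ, nsmul_eq_mul]; ring
    _ < 1 := by
        cases isEmpty_or_nonempty L with
        | inl _ => simp
        | inr _ =>
          rw [Real.exp_neg, mul_inv_lt_iff₀ (Real.exp_pos _), one_mul]
          exact (Real.log_lt_iff_lt_exp (by positivity)).1 hk

/-- The importance sampling weights of the sample `ω` drawn with probabilities proportional to `q`:
`∑ j, importanceWeight q ω j * f j` is an unbiased estimate of `∑ j, f j`. -/
noncomputable def importanceWeight {ι : Type*} [Fintype ι] [DecidableEq ι] {k : ℕ} (q : ι → ℝ)
    (ω : Fin k → ι) (j : ι) : ℝ :=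
  (∑ j, q j) / k * #{i | ω i = j} / q j

section ImportanceWeight

variable {ι : Type*} [Fintype ι] [DecidableEq ι] {k : ℕ} {q : ι → ℝ} (ω : Fin k → ι)

lemma importanceWeight_nonneg (hq : ∀ j, 0 ≤ q j) (j : ι) : 0 ≤ importanceWeight q ω j :=
  div_nonneg (mul_nonneg (div_nonneg (sum_nonneg fun j _ => hq j) k.cast_nonneg)
    (Nat.cast_nonneg _)) (hq j)

lemma card_importanceWeight_ne_zero_le : #{j | importanceWeight q ω j ≠ 0} ≤ k := by
  have hsub : ({j | importanceWeight q ω j ≠ 0} : Finset ι) ⊆ univ.image ω := fun j hj => by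
    by_contra hω
    simp only [mem_image, mem_univ, true_and, not_exists] at hω
    simp [importanceWeight, hω] at hj
  exact (card_le_card hsub).trans (card_image_le.trans_eq (card_fin k))

lemma sum_importanceWeight_mul (f : ι → ℝ) :
    ∑ j, importanceWeight q ω j * f j = (∑ j, q j) / k * ∑ i, f (ω i) / q (ω i) := by
  have hfiber : ∀ j, ∑ i with ω i = j, f (ω i) / q (ω i) = #{i | ω i = j} * (f j / q j) :=
    fun j => by
      rw [← nsmul_eq_mul, ← sum_const]
      exact sum_congr rfl fun i hi => by rw [(mem_filter.1 hi).2]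
  rw [← sum_fiberwise univ ω fun i => f (ω i) / q (ω i), mul_sum]
  refine sum_congr rfl fun j _ => ?_
  rw [hfiber, importanceWeight]
  ring

lemma sum_importanceWeight_mul_self (hq : ∀ j, q j ≠ 0) (hk : k ≠ 0) :
    ∑ j, importanceWeight q ω j * q j = ∑ j, q j := by
  rw [sum_importanceWeight_mul, sum_congr rfl fun i _ => div_self (hq (ω i))]
  simp [hk]

end ImportanceWeight

lemma exists_pmf_integral_div_eq {ι : Type*} [Fintype ι] [Nonempty ι] [MeasurableSpace ι]
    [MeasurableSingletonClass ι] {q : ι → ℝ} (hq : ∀ j, 0 < q j) :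
    ∃ P : PMF ι, ∀ f : ι → ℝ, ∫ j, f j / q j ∂P.toMeasure = (∑ j, f j) / ∑ j, q j := by
  have hS : 0 < ∑ j, q j := sum_pos (fun j _ => hq j) univ_nonempty
  have hprob : ∀ j, 0 ≤ q j / ∑ j, q j := fun j => div_nonneg (hq j).le hS.le
  refine ⟨PMF.ofFintype (fun j => ENNReal.ofReal (q j / ∑ j, q j)) ?_, fun f => ?_⟩
  · rw [← ENNReal.ofReal_sum_of_nonneg fun j _ => hprob j, ← sum_div, div_self hS.ne',
      ENNReal.ofReal_one]
  · rw [PMF.integral_eq_sum, sum_div univ f]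
    refine sum_congr rfl fun j _ => ?_
    have := hq j
    rw [PMF.ofFintype_apply, ENNReal.toReal_ofReal (hprob j), smul_eq_mul]
    field_simp

theorem exists_sparse_weights {ι L : Type*} [Fintype ι] [Nonempty ι] [Fintype L] {q : ι → ℝ}
    (hq : ∀ j, 0 < q j) {ψ : L → ι → ℝ} (hψ : ∀ l j, |ψ l j| ≤ q j) {k : ℕ} {δ : ℝ}
    (hδ : 0 ≤ δ) (hk : Real.log (2 * Fintype.card L) < k * δ ^ 2 / 2) :
    ∃ w : ι → ℝ, (∀ j, 0 ≤ w j) ∧ #{j | w j ≠ 0} ≤ k ∧ ∑ j, w j * q j = ∑ j, q j ∧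
      ∀ l, |∑ j, (w j - 1) * ψ l j| ≤ δ * ∑ j, q j := by
  classical
  let _ : MeasurableSpace ι := ⊤
  obtain ⟨P, hP⟩ := exists_pmf_integral_div_eq hq
  have hS : 0 < ∑ j, q j := sum_pos (fun j _ => hq j) univ_nonempty
  have hk0 : k ≠ 0 := by
    rintro rfl
    have := Real.log_natCast_nonneg (2 * Fintype.card L)
    push_cast at this hk
    linarith
  have hratio : ∀ l j, |ψ l j / q j| ≤ 1 := fun l j => by
    rw [abs_div, abs_of_pos (hq j)]
    exact div_le_one_of_le₀ (hψ l j) (hq j).le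
  obtain ⟨ω, hω⟩ := exists_sample_forall_abs_sum_sub_integral_lt P.toMeasure
    (X := fun l j => ψ l j / q j) (fun _ => .of_discrete) hratio hδ hk
  refine ⟨importanceWeight q ω, importanceWeight_nonneg ω fun j => (hq j).le,
    card_importanceWeight_ne_zero_le ω,
    sum_importanceWeight_mul_self ω (fun j => (hq j).ne') hk0, fun l => ?_⟩
  have hdeviation : ∑ j, (importanceWeight q ω j - 1) * ψ l j =
      (∑ j, q j) / k * ∑ i, (ψ l (ω i) / q (ω i) - ∫ j, ψ l j / q j ∂P.toMeasure) := by
    simp only [sub_mul, one_mul, sum_sub_distrib, sum_importanceWeight_mul, hP, sum_const,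
      card_fin, nsmul_eq_mul]
    field_simp
  rw [hdeviation, abs_mul, abs_of_pos (by positivity)]
  calc (∑ j, q j) / k * |∑ i, (ψ l (ω i) / q (ω i) - ∫ j, ψ l j / q j ∂P.toMeasure)|
      ≤ (∑ j, q j) / k * (k * δ) := by gcongr; exact (hω l).le
    _ = δ * ∑ j, q j := by field_simp

end Sampling

section Grid

lemma exists_int_abs_sub_le {h : ℝ} (hh : 0 < h) {N : ℕ} {x : ℝ} (hx : |x| ≤ h * N) :
    ∃ p ∈ Icc (-N : ℤ) N, |x - h * p| ≤ h := by
  obtain ⟨hlo, hhi⟩ := abs_le.1 hx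
  have hlo' : -(N : ℝ) ≤ x / h := by rw [le_div_iff₀ hh]; linarith
  have hhi' : x / h ≤ N := by rw [div_le_iff₀ hh]; linarith
  refine ⟨⌊x / h⌋, mem_Icc.2 ⟨Int.le_floor.2 (by exact_mod_cast hlo'), ?_⟩, ?_⟩
  · exact_mod_cast (Int.floor_le (x / h)).trans hhi'
  · have hfract : x - h * ⌊x / h⌋ = h * Int.fract (x / h) := by
      rw [Int.fract]; field_simp
    rw [hfract, abs_mul, abs_of_pos hh, Int.abs_fract]
    exact mul_le_of_le_one_right hh.le (Int.fract_lt_one _).le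

lemma card_fun_Icc_neg (κ : Type*) [Fintype κ] [DecidableEq κ] (N : ℕ) :
    Fintype.card (κ → Icc (-N : ℤ) N) = (2 * N + 1) ^ Fintype.card κ := by
  have : ((N : ℤ) + 1 - -N).toNat = 2 * N + 1 := by omega
  rw [Fintype.card_fun, Fintype.card_coe, Int.card_Icc, this]

variable {κ : Type*} [Fintype κ] {F : (κ → ℝ) → ℝ} {M R : ℝ} {K : ℕ}

lemma abs_le_of_grid_of_mem_box (hM : 0 ≤ M) (hR : 0 < R) (hK : 0 < K)
    (hlip : ∀ a b, |F a - F b| ≤ M * ∑ k, |a k - b k|)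
    (hgrid : ∀ p : κ → Icc (-(K ^ 2 : ℕ) : ℤ) (K ^ 2 : ℕ),
      |F fun k => R / K * p k| ≤ M / K * (R + ∑ k, |R / K * p k|))
    {a : κ → ℝ} (ha : ∀ k, |a k| ≤ R * K) :
    |F a| ≤ M / K * ((2 * Fintype.card κ + 1) * R + ∑ k, |a k|) := by
  have hK1 : (1 : ℝ) ≤ K := by exact_mod_cast hK
  have hmesh : ∀ k, |a k| ≤ R / K * (K ^ 2 : ℕ) := fun k =>
    (ha k).trans_eq (by push_cast; field_simp)
  choose p hp hround using fun k => exists_int_abs_sub_le (by positivity) (hmesh k)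
  set b : κ → ℝ := fun k => R / K * p k
  have hdist : ∑ k, |a k - b k| ≤ Fintype.card κ * (R / K) := by
    simpa using sum_le_card_nsmul univ _ _ fun k _ => hround k
  have hbR : R / K ≤ R := div_le_self hR.le hK1
  have hb : ∑ k, |b k| ≤ ∑ k, |a k| + Fintype.card κ * R := by
    calc ∑ k, |b k| ≤ ∑ k, (|a k| + |a k - b k|) := sum_le_sum fun k _ => by
          linarith [abs_sub_abs_le_abs_sub (b k) (a k), abs_sub_comm (a k) (b k)]
      _ ≤ ∑ k, |a k| + Fintype.card κ * R := by
          rw [sum_add_distrib]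
          have : Fintype.card κ * (R / K) ≤ Fintype.card κ * R := by gcongr
          linarith
  calc |F a| ≤ |F a - F b| + |F b| := by linarith [abs_sub_abs_le_abs_sub (F a) (F b)]
    _ ≤ M * (Fintype.card κ * (R / K)) + M / K * (R + (∑ k, |a k| + Fintype.card κ * R)) := by
        gcongr
        · exact (hlip a b).trans (by gcongr)
        · exact (hgrid fun k => ⟨p k, hp k⟩).trans (by gcongr)
    _ = M / K * ((2 * Fintype.card κ + 1) * R + ∑ k, |a k|) := by ring

lemma abs_le_of_grid_of_notMem_box (hM : 0 ≤ M) (hR : 0 < R) (hK : 0 < K)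
    (hlip : ∀ a b, |F a - F b| ≤ M * ∑ k, |a k - b k|)
    (hhom : ∀ (s : ℝ) a, 1 ≤ s → |F (s • a) - s * F a| ≤ M * R * s)
    (hgrid : ∀ p : κ → Icc (-(K ^ 2 : ℕ) : ℤ) (K ^ 2 : ℕ),
      |F fun k => R / K * p k| ≤ M / K * (R + ∑ k, |R / K * p k|))
    {a : κ → ℝ} (ha : R * K ≤ ∑ k, |a k|) :
    |F a| ≤ (2 * Fintype.card κ + 3) * M / K * ∑ k, |a k| := by
  have hK1 : (1 : ℝ) ≤ K := by exact_mod_cast hK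
  set A := ∑ k, |a k| with hA
  set s := A / (R * K) with hs_def
  have hs : 1 ≤ s := (one_le_div (by positivity)).2 ha
  have hsA : s * (R * K) = A := by rw [hs_def]; field_simp
  have hscaled : ∑ k, |(s⁻¹ • a) k| = R * K := by
    simp only [Pi.smul_apply, smul_eq_mul, abs_mul, ← mul_sum, ← hA, ← hsA]
    rw [abs_of_nonneg (by positivity)]
    field_simp
  have hinside : |F (s⁻¹ • a)| ≤ M / K * ((2 * Fintype.card κ + 1) * R + R * K) := by
    refine hscaled ▸ abs_le_of_grid_of_mem_box hM hR hK hlip hgrid fun k => ?_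
    exact hscaled ▸ single_le_sum (fun k _ => abs_nonneg ((s⁻¹ • a) k)) (mem_univ k)
  have hhom_a : |F a - s * F (s⁻¹ • a)| ≤ M * R * s := by
    simpa [smul_smul, (by positivity : s ≠ 0)] using hhom s (s⁻¹ • a) hs
  have hrounding : (2 * Fintype.card κ + 1) * R ≤ (2 * Fintype.card κ + 1) * R * K :=
    le_mul_of_one_le_right (by positivity) hK1
  calc |F a| ≤ |F a - s * F (s⁻¹ • a)| + |s * F (s⁻¹ • a)| := by
        linarith [abs_sub_abs_le_abs_sub (F a) (s * F (s⁻¹ • a))]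
    _ = |F a - s * F (s⁻¹ • a)| + s * |F (s⁻¹ • a)| := by
        rw [abs_mul, abs_of_pos (zero_lt_one.trans_le hs)]
    _ ≤ M * R * s + s * (M / K * ((2 * Fintype.card κ + 1) * R * K + R * K)) := by
        refine add_le_add hhom_a (mul_le_mul_of_nonneg_left (hinside.trans ?_) (by positivity))
        exact mul_le_mul_of_nonneg_left (add_le_add_left hrounding _) (by positivity)
    _ = (2 * Fintype.card κ + 3) * M / K * A := by rw [← hsA]; field_simp; ring

theorem abs_le_of_grid (hM : 0 ≤ M) (hR : 0 < R) (hK : 0 < K)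
    (hlip : ∀ a b, |F a - F b| ≤ M * ∑ k, |a k - b k|)
    (hhom : ∀ (s : ℝ) a, 1 ≤ s → |F (s • a) - s * F a| ≤ M * R * s)
    (hgrid : ∀ p : κ → Icc (-(K ^ 2 : ℕ) : ℤ) (K ^ 2 : ℕ),
      |F fun k => R / K * p k| ≤ M / K * (R + ∑ k, |R / K * p k|)) (a : κ → ℝ) :
    |F a| ≤ (2 * Fintype.card κ + 3) * M / K * (R + ∑ k, |a k|) := by
  set A := ∑ k, |a k|
  have hA : 0 ≤ A := sum_nonneg fun _ _ => abs_nonneg _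
  obtain hbox | hbox := le_total A (R * K)
  · have ha : ∀ k, |a k| ≤ R * K := fun k =>
      (single_le_sum (fun k _ => abs_nonneg (a k)) (mem_univ k)).trans hbox
    calc |F a| ≤ M / K * ((2 * Fintype.card κ + 1) * R + A) :=
          abs_le_of_grid_of_mem_box hM hR hK hlip hgrid ha
      _ ≤ M / K * ((2 * Fintype.card κ + 3) * R + (2 * Fintype.card κ + 3) * A) := by
          gcongr
          · norm_num
          · nlinarith [mul_nonneg (Fintype.card κ).cast_nonneg hA]
      _ = (2 * Fintype.card κ + 3) * M / K * (R + A) := by ring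
  · refine (abs_le_of_grid_of_notMem_box hM hR hK hlip hhom hgrid hbox).trans ?_
    gcongr
    exact le_add_of_nonneg_left hR.le

end Grid

/-- A 1-Lipschitz loss at uniform distance at most one from a positively homogeneous function, such
as the logistic loss, which is close to the hinge. Control of such a loss on a bounded set extends
to the whole space by scaling. -/
structure IsLipschitzNearHomogeneous (ℓ : ℝ → ℝ) : Prop where
  lipschitz : ∀ s t, |ℓ s - ℓ t| ≤ |s - t|
  near_homogeneous : ∃ h : ℝ → ℝ, (∀ s t, 0 ≤ s → h (s * t) = s * h t) ∧ ∀ t, |ℓ t - h t| ≤ 1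

namespace IsLipschitzNearHomogeneous

variable {ℓ : ℝ → ℝ}

lemma abs_apply_le (hℓ : IsLipschitzNearHomogeneous ℓ) (t : ℝ) : |ℓ t| ≤ 1 + |t| := by
  obtain ⟨h, hhom, hnear⟩ := hℓ.near_homogeneous
  have h_zero : h 0 = 0 := by simpa using hhom 0 0 le_rfl
  have hℓ_zero : |ℓ 0| ≤ 1 := by simpa [h_zero] using hnear 0
  have hlip : |ℓ t - ℓ 0| ≤ |t| := by simpa using hℓ.lipschitz t 0
  linarith [abs_sub_abs_le_abs_sub (ℓ t) (ℓ 0)]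

lemma abs_apply_mul_sub_le (hℓ : IsLipschitzNearHomogeneous ℓ) {s : ℝ} (hs : 1 ≤ s) (t : ℝ) :
    |ℓ (s * t) - s * ℓ t| ≤ 2 * s := by
  obtain ⟨h, hhom, hnear⟩ := hℓ.near_homogeneous
  calc |ℓ (s * t) - s * ℓ t| = |(ℓ (s * t) - h (s * t)) - s * (ℓ t - h t)| := by
        rw [hhom s t (by positivity)]; ring_nf
    _ ≤ |ℓ (s * t) - h (s * t)| + s * |ℓ t - h t| := by
        simpa only [abs_mul, abs_of_pos (zero_lt_one.trans_le hs)] using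
          abs_sub (ℓ (s * t) - h (s * t)) (s * (ℓ t - h t))
    _ ≤ 1 + s * 1 := by gcongr <;> exact hnear _
    _ ≤ 2 * s := by linarith

end IsLipschitzNearHomogeneous

lemma abs_sum_sub_one_mul_le {ι : Type*} [Fintype ι] {w q f : ι → ℝ} {c : ℝ} (hw : ∀ j, 0 ≤ w j)
    (hwq : ∑ j, w j * q j = ∑ j, q j) (hf : ∀ j, |f j| ≤ c * q j) :
    |∑ j, (w j - 1) * f j| ≤ 2 * c * ∑ j, q j := by
  have habs : ∀ j, |w j - 1| ≤ w j + 1 := fun j => abs_le.2 ⟨by linarith [hw j], by linarith⟩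
  calc |∑ j, (w j - 1) * f j| ≤ ∑ j, |w j - 1| * |f j| := by
        simpa only [abs_mul] using abs_sum_le_sum_abs (fun j => (w j - 1) * f j) univ
    _ ≤ ∑ j, (w j + 1) * (c * q j) := sum_le_sum fun j _ =>
        mul_le_mul (habs j) (hf j) (abs_nonneg _) (by linarith [hw j])
    _ = c * (∑ j, w j * q j + ∑ j, q j) := by
        rw [← sum_add_distrib, mul_sum]
        exact sum_congr rfl fun j _ => by ring
    _ = 2 * c * ∑ j, q j := by rw [hwq]; ring

/-- An upper bound, up to the factor `card ι + ∑ k, |a k|`, for the loss incurred at the index `j`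
by any vector `∑ k, a k • u k`; see `abs_loss_le_mul_sensitivity`. -/
noncomputable def sensitivity {ι κ : Type*} [Fintype ι] [Fintype κ] (u : κ → ι → ℝ) (j : ι) : ℝ :=
  ∑ k, |u k j| + (Fintype.card ι : ℝ)⁻¹

section Sensitivity

variable {ι κ L : Type*} [Fintype ι] [Fintype κ] [Fintype L] {u : κ → ι → ℝ}

lemma sensitivity_pos (u : κ → ι → ℝ) (j : ι) : 0 < sensitivity u j :=
  have : Nonempty ι := ⟨j⟩
  add_pos_of_nonneg_of_pos (sum_nonneg fun _ _ => abs_nonneg _) (by positivity)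

lemma one_le_card_mul_sensitivity (u : κ → ι → ℝ) (j : ι) :
    1 ≤ Fintype.card ι * sensitivity u j := by
  have : Nonempty ι := ⟨j⟩
  rw [sensitivity, mul_add, mul_inv_cancel₀ (by positivity)]
  exact le_add_of_nonneg_left (by positivity)

lemma sum_sensitivity_le (hu : ∀ k, ∑ j, |u k j| ≤ 1) :
    ∑ j, sensitivity u j ≤ Fintype.card κ + 1 := by
  have hfamily : ∑ j, ∑ k, |u k j| ≤ Fintype.card κ := by
    rw [sum_comm]
    simpa using sum_le_card_nsmul univ _ _ fun k _ => hu k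
  have huniform : ∑ _j : ι, (Fintype.card ι : ℝ)⁻¹ ≤ 1 := by
    simpa using mul_inv_le_one
  simpa only [sensitivity, sum_add_distrib] using add_le_add hfamily huniform

lemma abs_sum_mul_le_mul_sensitivity (u : κ → ι → ℝ) (a : κ → ℝ) (j : ι) :
    |∑ k, a k * u k j| ≤ (∑ k, |a k|) * sensitivity u j := by
  have hu_le : ∀ k, |u k j| ≤ sensitivity u j := fun k =>
    (single_le_sum (fun k _ => abs_nonneg (u k j)) (mem_univ k)).trans
      (le_add_of_nonneg_right (by positivity))
  rw [sum_mul]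
  refine (abs_sum_le_sum_abs _ _).trans (sum_le_sum fun k _ => ?_)
  rw [abs_mul]
  gcongr
  exact hu_le k

lemma abs_loss_le_mul_sensitivity {ℓ : ℝ → ℝ} (hℓ : IsLipschitzNearHomogeneous ℓ)
    (u : κ → ι → ℝ) (a : κ → ℝ) (j : ι) :
    |ℓ (∑ k, a k * u k j)| ≤ (Fintype.card ι + ∑ k, |a k|) * sensitivity u j := by
  rw [add_mul]
  exact (hℓ.abs_apply_le _).trans
    (add_le_add (one_le_card_mul_sensitivity u j) (abs_sum_mul_le_mul_sensitivity u a j))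

variable [Nonempty ι]

lemma abs_sum_sub_one_mul_loss_le_of_grid {ℓ : ι → ℝ → ℝ}
    (hℓ : ∀ j, IsLipschitzNearHomogeneous (ℓ j)) {w : ι → ℝ} (hw : ∀ j, 0 ≤ w j)
    (hwq : ∑ j, w j * sensitivity u j = ∑ j, sensitivity u j) {K : ℕ} (hK : 0 < K)
    (hgrid : ∀ p : κ → Icc (-(K ^ 2 : ℕ) : ℤ) (K ^ 2 : ℕ),
      |∑ j, (w j - 1) * ℓ j (∑ k, Fintype.card ι / K * p k * u k j)| ≤
        (∑ j, sensitivity u j) / K *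
          (Fintype.card ι + ∑ k, |(Fintype.card ι / K * p k : ℝ)|)) (a : κ → ℝ) :
    |∑ j, (w j - 1) * ℓ j (∑ k, a k * u k j)| ≤
      (2 * Fintype.card κ + 3) * (4 * ∑ j, sensitivity u j) / K *
        (Fintype.card ι + ∑ k, |a k|) := by
  have hS : 0 < ∑ j, sensitivity u j := sum_pos (fun j _ => sensitivity_pos u j) univ_nonempty
  refine abs_le_of_grid (F := fun a => ∑ j, (w j - 1) * ℓ j (∑ k, a k * u k j))
    (by positivity) (by positivity) hK (fun a b => ?lipschitz) (fun s a hs => ?homogeneous)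
    (fun p => (hgrid p).trans ?_) a
  case lipschitz =>
    have hlip : ∀ j, |ℓ j (∑ k, a k * u k j) - ℓ j (∑ k, b k * u k j)| ≤
        (∑ k, |a k - b k|) * sensitivity u j := fun j => by
      refine ((hℓ j).lipschitz _ _).trans ?_
      simpa only [sub_mul, sum_sub_distrib] using
        abs_sum_mul_le_mul_sensitivity u (fun k => a k - b k) j
    have hnonneg : 0 ≤ ∑ k, |a k - b k| := sum_nonneg fun _ _ => abs_nonneg _
    have h := abs_sum_sub_one_mul_le hw hwq hlip
    simp only [mul_sub, sum_sub_distrib] at h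
    nlinarith [mul_nonneg hnonneg hS.le]
  case homogeneous =>
    have hhom : ∀ j, |ℓ j (∑ k, (s • a) k * u k j) - s * ℓ j (∑ k, a k * u k j)| ≤
        2 * s * Fintype.card ι * sensitivity u j := fun j => by
      simp only [Pi.smul_apply, smul_eq_mul, mul_assoc s, ← mul_sum]
      refine ((hℓ j).abs_apply_mul_sub_le hs _).trans ?_
      rw [mul_assoc (2 * s)]
      exact le_mul_of_one_le_right (by positivity) (one_le_card_mul_sensitivity u j)
    have h := abs_sum_sub_one_mul_le hw hwq hhom
    simp only [mul_sub, sum_sub_distrib, mul_left_comm _ s, ← mul_sum] at h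
    linarith
  · gcongr
    linarith

theorem exists_sparse_weights_forall_combination {ℓ : L → ι → ℝ → ℝ}
    (hℓ : ∀ i j, IsLipschitzNearHomogeneous (ℓ i j)) (hu : ∀ k, ∑ j, |u k j| ≤ 1) {K m : ℕ}
    (hK : 0 < K)
    (hm : 2 * K ^ 2 * Real.log (2 * (Fintype.card L * (2 * K ^ 2 + 1) ^ Fintype.card κ)) < m) :
    ∃ w : ι → ℝ, (∀ j, 0 ≤ w j) ∧ #{j | w j ≠ 0} ≤ m ∧ ∀ i (a : κ → ℝ),
      |∑ j, (w j - 1) * ℓ i j (∑ k, a k * u k j)| ≤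
        12 * (Fintype.card κ + 1) ^ 2 / K * (Fintype.card ι + ∑ k, |a k|) := by
  classical
  let G := κ → Icc (-(K ^ 2 : ℕ) : ℤ) (K ^ 2 : ℕ)
  let x (p : G) (k : κ) : ℝ := Fintype.card ι / K * p k
  let r (p : G) : ℝ := Fintype.card ι + ∑ k, |x p k|
  have hr : ∀ p, 0 < r p := fun p => by positivity
  have hcard : (Fintype.card (L × G) : ℝ) =
      Fintype.card L * (2 * K ^ 2 + 1) ^ Fintype.card κ := by
    rw [Fintype.card_prod, card_fun_Icc_neg]
    push_cast
    rfl
  obtain ⟨w, hw, hsupp, hwq, htest⟩ := exists_sparse_weights (sensitivity_pos u)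
    (ψ := fun (l : L × G) j => ℓ l.1 j (∑ k, x l.2 k * u k j) / r l.2) (k := m) (δ := (K : ℝ)⁻¹)
    (fun l j => by
      rw [abs_div, abs_of_pos (hr l.2), div_le_iff₀' (hr l.2)]
      exact abs_loss_le_mul_sensitivity (hℓ l.1 j) u (x l.2) j)
    (by positivity) (by
      rw [hcard, inv_pow, ← div_eq_mul_inv, div_div, lt_div_iff₀ (by positivity)]
      linarith)
  refine ⟨w, hw, hsupp, fun i a => ?_⟩
  have hgrid : ∀ p : G, |∑ j, (w j - 1) * ℓ i j (∑ k, x p k * u k j)| ≤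
      (∑ j, sensitivity u j) / K * r p := fun p => by
    have h := htest (i, p)
    simp only [← mul_div_assoc, ← sum_div] at h
    rwa [abs_div, abs_of_pos (hr p), div_le_iff₀ (hr p), inv_mul_eq_div] at h
  calc |∑ j, (w j - 1) * ℓ i j (∑ k, a k * u k j)|
      ≤ (2 * Fintype.card κ + 3) * (4 * ∑ j, sensitivity u j) / K *
          (Fintype.card ι + ∑ k, |a k|) :=
        abs_sum_sub_one_mul_loss_le_of_grid (hℓ i) hw hwq hK hgrid a
    _ ≤ (3 * (Fintype.card κ + 1)) * (4 * (Fintype.card κ + 1)) / K *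
          (Fintype.card ι + ∑ k, |a k|) := by
        gcongr
        · exact mul_nonneg zero_le_four (sum_nonneg fun j _ => (sensitivity_pos u j).le)
        · linarith [(Fintype.card κ).cast_nonneg (α := ℝ)]
        · exact sum_sensitivity_le hu
    _ = 12 * (Fintype.card κ + 1) ^ 2 / K * (Fintype.card ι + ∑ k, |a k|) := by ring

end Sensitivity

theorem exists_sparse_weights_forall_mem_submodule {ι L : Type*} [Fintype ι] [Nonempty ι]
    [Fintype L] {ℓ : L → ι → ℝ → ℝ} (hℓ : ∀ i j, IsLipschitzNearHomogeneous (ℓ i j))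
    (T : Submodule ℝ (ι → ℝ)) {K m : ℕ} (hK : 0 < K)
    (hm : 2 * K ^ 2 *
      Real.log (2 * (Fintype.card L * (2 * K ^ 2 + 1) ^ Module.finrank ℝ T)) < m) :
    ∃ w : ι → ℝ, (∀ j, 0 ≤ w j) ∧ #{j | w j ≠ 0} ≤ m ∧ ∀ i, ∀ t ∈ T,
      |∑ j, (w j - 1) * ℓ i j (t j)| ≤
        12 * (Module.finrank ℝ T + 1) ^ 3 / K * (Fintype.card ι + ∑ j, |t j|) := by
  obtain ⟨u, hu, hspan⟩ := exists_l1_auerbach_family T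
  obtain ⟨w, hw, hsupp, herr⟩ := exists_sparse_weights_forall_combination hℓ
    (fun k => (hu k).le) hK (by rwa [Fintype.card_fin])
  refine ⟨w, hw, hsupp, fun i t ht => ?_⟩
  obtain ⟨a, rfl, ha⟩ := hspan t ht
  set t := ∑ k, a k • u k
  have htj : ∀ j, t j = ∑ k, a k * u k j := fun j => by simp [t, Finset.sum_apply]
  have ha_sum : ∑ k, |a k| ≤ Module.finrank ℝ T * ∑ j, |t j| := by
    simpa using sum_le_card_nsmul univ _ _ fun k _ => ha k
  have ht0 : 0 ≤ ∑ j, |t j| := sum_nonneg fun _ _ => abs_nonneg _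
  have h := herr i a
  simp only [← htj, Fintype.card_fin] at h
  calc |∑ j, (w j - 1) * ℓ i j (t j)|
      ≤ 12 * (Module.finrank ℝ T + 1) ^ 2 / K * (Fintype.card ι + ∑ k, |a k|) := h
    _ ≤ 12 * (Module.finrank ℝ T + 1) ^ 2 / K *
          ((Module.finrank ℝ T + 1) * (Fintype.card ι + ∑ j, |t j|)) := by
        gcongr
        linarith [mul_nonneg (Module.finrank ℝ T).cast_nonneg (α := ℝ) (Fintype.card ι).cast_nonneg]
    _ = 12 * (Module.finrank ℝ T + 1) ^ 3 / K * (Fintype.card ι + ∑ j, |t j|) := by ring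

section Logistic

lemma max_zero_le_log_one_add_exp (t : ℝ) : max t 0 ≤ Real.log (1 + Real.exp t) := by
  refine max_le ?_ (Real.log_nonneg (by linarith [Real.exp_pos t]))
  rw [Real.le_log_iff_exp_le (by positivity)]
  linarith

lemma log_one_add_exp_le (t : ℝ) : Real.log (1 + Real.exp t) ≤ max t 0 + Real.log 2 := by
  rw [← Real.log_exp (max t 0), ← Real.log_mul (by positivity) two_ne_zero]
  have ht : Real.exp t ≤ Real.exp (max t 0) := Real.exp_le_exp.2 (le_max_left t 0)
  have hone : 1 ≤ Real.exp (max t 0) := Real.one_le_exp (le_max_right t 0)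
  exact Real.log_le_log (by positivity) (by linarith)

lemma log_two_add_half_le_log_one_add_exp (t : ℝ) :
    Real.log 2 + t / 2 ≤ Real.log (1 + Real.exp t) := by
  rw [← Real.log_exp (t / 2), ← Real.log_mul two_ne_zero (by positivity)]
  refine Real.log_le_log (by positivity) ?_
  have hsq : Real.exp t = Real.exp (t / 2) ^ 2 := by rw [← Real.exp_nat_mul]; ring_nf
  nlinarith [sq_nonneg (Real.exp (t / 2) - 1)]

lemma log_one_add_exp_sub_le (s t : ℝ) :
    Real.log (1 + Real.exp s) - Real.log (1 + Real.exp t) ≤ |s - t| := by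
  rw [sub_le_iff_le_add', ← Real.log_exp |s - t|, ← Real.log_mul (by positivity) (by positivity)]
  refine Real.log_le_log (by positivity) ?_
  have hone : 1 ≤ Real.exp |s - t| := Real.one_le_exp (abs_nonneg _)
  have hs : Real.exp s ≤ Real.exp t * Real.exp |s - t| := by
    rw [← Real.exp_add, Real.exp_le_exp]
    linarith [le_abs_self (s - t)]
  linarith

lemma abs_log_one_add_exp_sub_le (s t : ℝ) :
    |Real.log (1 + Real.exp s) - Real.log (1 + Real.exp t)| ≤ |s - t| := by
  rw [abs_le']
  exact ⟨log_one_add_exp_sub_le s t, by simpa [abs_sub_comm] using log_one_add_exp_sub_le t s⟩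

lemma isLipschitzNearHomogeneous_log_one_add_exp_mul {y : ℝ} (hy : |y| ≤ 1) :
    IsLipschitzNearHomogeneous fun t => Real.log (1 + Real.exp (y * t)) where
  lipschitz s t := by
    refine (abs_log_one_add_exp_sub_le _ _).trans ?_
    rw [← mul_sub, abs_mul]
    exact mul_le_of_le_one_left (abs_nonneg _) hy
  near_homogeneous := by
    refine ⟨fun t => max (y * t) 0, fun s t hs => ?_, fun t => abs_le.2 ⟨?_, ?_⟩⟩
    · rw [mul_max_of_nonneg _ _ hs, mul_zero, mul_left_comm]
    · linarith [max_zero_le_log_one_add_exp (y * t)]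
    · linarith [log_one_add_exp_le (y * t), Real.log_two_lt_d9]

end Logistic

namespace Mu1Complex

variable {ι : Type} [Fintype ι] {d : ℕ} {x : ι → Fin d → ℝ} {μ : ℝ}

lemma sum_abs_le (hx : Mu1Complex x μ) (η : Fin d → ℝ) :
    ∑ i, |x i ⬝ᵥ η| ≤ (1 + μ) * ∑ i, max (x i ⬝ᵥ η) 0 := by
  -- Complexity at `-η` bounds the negative part of `Xη` by its positive part.
  have hneg : ∑ i, max (-(x i ⬝ᵥ η)) 0 ≤ μ * ∑ i, max (x i ⬝ᵥ η) 0 := by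
    have h := hx (-η)
    simp only [dotProduct_neg, abs_neg, neg_lt_zero, sum_filter] at h
    convert h using 3 with i _ i
    · rw [max_comm, max_def]
    · split_ifs with hi
      · rw [max_eq_left hi.le, abs_of_pos hi]
      · exact max_eq_right (not_lt.1 hi)
  simp only [← max_zero_add_max_neg_zero_eq_abs_self, sum_add_distrib]
  linarith

lemma card_add_sum_abs_le (hx : Mu1Complex x μ) (hμ : 1 ≤ μ) (η : Fin d → ℝ) :
    Fintype.card ι + ∑ i, |x i ⬝ᵥ η| ≤ 6 * μ * ∑ i, Real.log (1 + Real.exp (x i ⬝ᵥ η)) := by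
  set f := ∑ i, Real.log (1 + Real.exp (x i ⬝ᵥ η))
  have hpos : ∑ i, max (x i ⬝ᵥ η) 0 ≤ f := sum_le_sum fun i _ => max_zero_le_log_one_add_exp _
  have hf : 0 ≤ f := (sum_nonneg fun i _ => le_max_right _ _).trans hpos
  have hsum : ∑ i, |x i ⬝ᵥ η| ≤ (1 + μ) * f := (hx.sum_abs_le η).trans (by gcongr)
  have hcard : Fintype.card ι ≤ 2 * f + ∑ i, |x i ⬝ᵥ η| := by
    simp only [f, mul_sum, ← sum_add_distrib, ← card_univ, ← nsmul_one (#univ), ← sum_const]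
    refine sum_le_sum fun i _ => ?_
    linarith [log_two_add_half_le_log_one_add_exp (x i ⬝ᵥ η), neg_abs_le (x i ⬝ᵥ η),
      Real.log_two_gt_d9]
  nlinarith

end Mu1Complex

theorem exists_sparse_weights_logistic {ι L : Type} [Fintype ι] [Nonempty ι] [Fintype L]
    [Nonempty L] {d : ℕ} (β : ι → Fin d → ℝ) {Y : L → ι → ℝ} (hY : ∀ i j, Y i j = 1 ∨ Y i j = -1)
    {μ : ℝ} (hμ : 1 ≤ μ) (hβ : ∀ i, Mu1Complex (fun j k => -Y i j * β j k) μ) {K m : ℕ}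
    (hK : 0 < K)
    (hm : 2 * K ^ 2 * Real.log (2 * (Fintype.card L * (2 * K ^ 2 + 1) ^ d)) < m) :
    ∃ w : ι → ℝ, (∀ j, 0 ≤ w j) ∧ #{j | w j ≠ 0} ≤ m ∧ ∀ i η,
      |∑ j, w j * Real.log (1 + Real.exp (-Y i j * (β j ⬝ᵥ η))) -
          ∑ j, Real.log (1 + Real.exp (-Y i j * (β j ⬝ᵥ η)))| ≤
        72 * (d + 1) ^ 3 * μ / K * ∑ j, Real.log (1 + Real.exp (-Y i j * (β j ⬝ᵥ η))) := by
  have hY_abs : ∀ i j, |-Y i j| = 1 := fun i j => by rcases hY i j with h | h <;> simp [h]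
  let T := LinearMap.range (Matrix.mulVecLin (Matrix.of β))
  have hrank : Module.finrank ℝ T ≤ d := by
    simpa using LinearMap.finrank_range_le (Matrix.mulVecLin (Matrix.of β))
  have hm_rank : 2 * K ^ 2 *
      Real.log (2 * (Fintype.card L * (2 * K ^ 2 + 1) ^ Module.finrank ℝ T)) < m := by
    refine lt_of_le_of_lt ?_ hm
    gcongr
    linarith [sq_nonneg (K : ℝ)]
  obtain ⟨w, hw, hsupp, herr⟩ := exists_sparse_weights_forall_mem_submodule
    (fun i j => isLipschitzNearHomogeneous_log_one_add_exp_mul (hY_abs i j).le) T hK hm_rank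
  refine ⟨w, hw, hsupp, fun i η => ?_⟩
  have hrow : ∀ j, (fun k => -Y i j * β j k) ⬝ᵥ η = -Y i j * (β j ⬝ᵥ η) := fun j =>
    smul_dotProduct (-Y i j) (β j) η
  have hlower := (hβ i).card_add_sum_abs_le hμ η
  simp only [hrow, abs_mul, hY_abs, one_mul] at hlower
  calc |∑ j, w j * Real.log (1 + Real.exp (-Y i j * (β j ⬝ᵥ η))) -
          ∑ j, Real.log (1 + Real.exp (-Y i j * (β j ⬝ᵥ η)))|
      = |∑ j, (w j - 1) * Real.log (1 + Real.exp (-Y i j * (β j ⬝ᵥ η)))| := by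
        simp only [sub_mul, one_mul, sum_sub_distrib]
    _ ≤ 12 * (Module.finrank ℝ T + 1) ^ 3 / K * (Fintype.card ι + ∑ j, |β j ⬝ᵥ η|) :=
        herr i (fun j => β j ⬝ᵥ η) ⟨η, rfl⟩
    _ ≤ 12 * (d + 1) ^ 3 / K *
          (6 * μ * ∑ j, Real.log (1 + Real.exp (-Y i j * (β j ⬝ᵥ η)))) := by
        gcongr
    _ = 72 * (d + 1) ^ 3 * μ / K * ∑ j, Real.log (1 + Real.exp (-Y i j * (β j ⬝ᵥ η))) := by ring

lemma half_le_log_natCast_mul {N : ℕ} {A : ℝ} (hN : 0 < N) (hA : 2 ≤ A) :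
    1 / 2 ≤ Real.log (N * A) := by
  have hN1 : (1 : ℝ) ≤ N := by exact_mod_cast hN
  have : Real.log 2 ≤ Real.log (N * A) := Real.log_le_log two_pos (by nlinarith)
  linarith [Real.log_two_gt_d9]

lemma log_two_mul_mul_pow_le {N K d : ℕ} {c A : ℝ} (hN : 0 < N) (hK : 0 < K) (hA : 2 ≤ A)
    (hKA : K ≤ c * A) :
    Real.log (2 * (N * (2 * K ^ 2 + 1) ^ d)) ≤ (2 + d * (6 * c ^ 2 + 2)) * Real.log (N * A) := by
  have hK1 : (1 : ℝ) ≤ K := by exact_mod_cast hK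
  have hN1 : (1 : ℝ) ≤ N := by exact_mod_cast hN
  have hc : 0 < c := pos_of_mul_pos_left (by linarith) (by linarith : 0 ≤ A)
  have hlogA : Real.log A ≤ Real.log (N * A) :=
    Real.log_le_log (by positivity) (le_mul_of_one_le_left (by positivity) hN1)
  have hlogN : Real.log (2 * N) ≤ Real.log (N * A) :=
    Real.log_le_log (by positivity) (by nlinarith)
  have hhalf := half_le_log_natCast_mul hN hA
  have hgrid : 2 * (K : ℝ) ^ 2 + 1 ≤ 3 * c ^ 2 * A ^ 2 := by
    nlinarith [pow_le_pow_left₀ (by positivity) hKA 2]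
  have hloggrid : Real.log (2 * (K : ℝ) ^ 2 + 1) ≤ (6 * c ^ 2 + 2) * Real.log (N * A) := by
    calc Real.log (2 * (K : ℝ) ^ 2 + 1) ≤ Real.log (3 * c ^ 2 * A ^ 2) :=
          Real.log_le_log (by positivity) hgrid
      _ = Real.log (3 * c ^ 2) + 2 * Real.log A := by
          rw [Real.log_mul (by positivity) (by positivity), Real.log_pow, Nat.cast_two]
      _ ≤ 3 * c ^ 2 + 2 * Real.log (N * A) := by
          linarith [Real.log_le_self (by positivity : 0 ≤ 3 * c ^ 2)]
      _ ≤ (6 * c ^ 2 + 2) * Real.log (N * A) := by nlinarith [sq_nonneg c]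
  rw [← mul_assoc, Real.log_mul (by positivity) (by positivity), Real.log_pow]
  nlinarith [mul_le_mul_of_nonneg_left hloggrid d.cast_nonneg]

lemma exists_sample_size {N K d : ℕ} {c A : ℝ} (hN : 0 < N) (hK : 0 < K) (hA : 2 ≤ A)
    (hKA : K ≤ c * A) :
    ∃ m : ℕ, 2 * K ^ 2 * Real.log (2 * (N * (2 * K ^ 2 + 1) ^ d)) < m ∧
      m ≤ (2 * c ^ 2 * (2 + d * (6 * c ^ 2 + 2)) + 1) * A ^ 2 * Real.log (N * A) := by
  set tests : ℝ := 2 * (N * (2 * K ^ 2 + 1) ^ d) with htests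
  have hlog : 0 ≤ Real.log tests := by
    have := Real.log_natCast_nonneg (2 * (N * (2 * K ^ 2 + 1) ^ d))
    rw [htests]
    exact_mod_cast this
  refine ⟨⌊2 * K ^ 2 * Real.log tests⌋₊ + 1, by exact_mod_cast Nat.lt_floor_add_one _, ?_⟩
  have hone : 1 ≤ A ^ 2 * Real.log (N * A) := by nlinarith [half_le_log_natCast_mul hN hA]
  calc ((⌊2 * K ^ 2 * Real.log tests⌋₊ + 1 : ℕ) : ℝ)
      ≤ 2 * K ^ 2 * Real.log tests + 1 := by
        push_cast
        gcongr
        exact Nat.floor_le (by positivity)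
    _ ≤ 2 * (c * A) ^ 2 * ((2 + d * (6 * c ^ 2 + 2)) * Real.log (N * A)) +
          A ^ 2 * Real.log (N * A) := by
        gcongr
        exact log_two_mul_mul_pow_le hN hK hA hKA
    _ = (2 * c ^ 2 * (2 + d * (6 * c ^ 2 + 2)) + 1) * A ^ 2 * Real.log (N * A) := by ring

theorem stmt0_general (d : ℕ) :
    ∃ C : ℝ, 0 < C ∧
      ∀ (ι L : Type) [Fintype ι] [Nonempty ι] [Fintype L] [Nonempty L]
        (β : ι → Fin d → ℝ) (Y : L → ι → ℝ), (∀ i j, Y i j = 1 ∨ Y i j = -1) →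
      ∀ μ ε : ℝ, 1 ≤ μ → 0 < ε → ε ≤ 1 / 2 →
        (∀ i, Mu1Complex (fun j k => -Y i j * β j k) μ) →
        ∃ w : ι → ℝ, (∀ j, 0 ≤ w j) ∧
          (#{j | w j ≠ 0} : ℝ) ≤ C * (μ / ε) ^ 2 * Real.log (Fintype.card L * (μ / ε)) ∧
          ∀ i (η : Fin d → ℝ),
            |∑ j, w j * Real.log (1 + Real.exp (-Y i j * (β j ⬝ᵥ η))) -
                ∑ j, Real.log (1 + Real.exp (-Y i j * (β j ⬝ᵥ η)))| ≤
              ε * ∑ j, Real.log (1 + Real.exp (-Y i j * (β j ⬝ᵥ η))) := by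
  set c : ℝ := 73 * (d + 1) ^ 3 with hc
  refine ⟨2 * c ^ 2 * (2 + d * (6 * c ^ 2 + 2)) + 1, by positivity,
    fun ι L _ _ _ _ β Y hY μ ε hμ hε hε_half hβ => ?_⟩
  have hA : 2 ≤ μ / ε := by rw [le_div_iff₀ hε]; linarith
  set K := ⌈72 * (d + 1) ^ 3 * (μ / ε)⌉₊
  have hK : 0 < K := Nat.ceil_pos.2 (by positivity)
  have hK_ge : 72 * (d + 1) ^ 3 * (μ / ε) ≤ K := Nat.le_ceil _
  have hK_le : K ≤ c * (μ / ε) := by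
    have hd : (1 : ℝ) ≤ (d + 1) ^ 3 := one_le_pow₀ (by linarith [d.cast_nonneg (α := ℝ)])
    have := Nat.ceil_lt_add_one (by positivity : 0 ≤ 72 * ((d : ℝ) + 1) ^ 3 * (μ / ε))
    rw [hc]
    nlinarith
  have haccuracy : 72 * (d + 1) ^ 3 * μ / K ≤ ε := by
    rw [div_le_iff₀ (by positivity)]
    rwa [← mul_div_assoc, div_le_iff₀' hε] at hK_ge
  obtain ⟨m, hm, hm_le⟩ := exists_sample_size (Fintype.card_pos (α := L)) hK hA hK_le
  obtain ⟨w, hw, hsupp, herr⟩ := exists_sparse_weights_logistic β hY hμ hβ hK hm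
  refine ⟨w, hw, (Nat.cast_le.2 hsupp).trans hm_le, fun i η => (herr i η).trans ?_⟩
  gcongr
  exact sum_nonneg fun j _ => (le_max_right _ _).trans (max_zero_le_log_one_add_exp _)

lemma div_sq_mul_log_mul_div_le {m : ℕ} (hm : 3 ≤ m) {μ ε : ℝ} (hμ : 1 ≤ μ) (hε : 0 < ε)
    (hε1 : ε ≤ 1) :
    (μ / ε) ^ 2 * Real.log (m * (μ / ε)) ≤ μ ^ 3 / ε ^ 4 * Real.log m := by
  have hA : 1 ≤ μ / ε := by rw [one_le_div hε]; linarith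
  have hlog : 1 ≤ Real.log m := by
    rw [Real.le_log_iff_exp_le (by positivity)]
    have : (3 : ℝ) ≤ m := by exact_mod_cast hm
    linarith [Real.exp_one_lt_d9]
  calc (μ / ε) ^ 2 * Real.log (m * (μ / ε)) ≤ (μ / ε) ^ 2 * (μ / ε * Real.log m) := by
        gcongr
        rw [Real.log_mul (by positivity) (by positivity)]
        nlinarith [Real.log_le_sub_one_of_pos (by positivity : 0 < μ / ε)]
    _ = μ ^ 3 / ε ^ 3 * Real.log m := by rw [← div_pow]; ring
    _ ≤ μ ^ 3 / ε ^ 4 * Real.log m := by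
        gcongr ?_ * _
        exact div_le_div_of_nonneg_left (by positivity) (by positivity)
          (pow_le_pow_of_le_one hε.le hε1 (by norm_num))

/-- Coresets for the 2PL IRT model: there is an absolute constant `C > 0` such that for
all `n, m ≥ 3`, abilities `β`, labels `Y`, `μ ≥ 1` and `ε ∈ (0,1/2)`, if each matrix
`X_{(i)}` with rows `-Y i j • β j` is `μ`-complex in the ℓ₁ sense, then there is a
nonnegative weight vector supported on at most
`C (μ³/ε⁴)((log n)⁴ (log log n)⁴ + log m)` indices that is a `(1+ε)`-coreset
simultaneously for all `m` logistic objectives. -/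
theorem stmt0 :
    ∃ C : ℝ, 0 < C ∧
      ∀ (n m : ℕ), 3 ≤ n → 3 ≤ m →
      ∀ (β : Fin n → Fin 2 → ℝ) (Y : Fin m → Fin n → ℝ),
        (∀ i j, Y i j = 1 ∨ Y i j = -1) →
      ∀ μ ε : ℝ, 1 ≤ μ → 0 < ε → ε < 1 / 2 →
        (∀ i : Fin m, Mu1Complex (fun j k => -Y i j * β j k) μ) →
        ∃ w : Fin n → ℝ, (∀ j, 0 ≤ w j) ∧
          ((Finset.univ.filter fun j => w j ≠ 0).card : ℝ) ≤
            C * (μ ^ 3 / ε ^ 4) *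
              ((Real.log n) ^ 4 * (Real.log (Real.log n)) ^ 4 + Real.log m) ∧
          ∀ (i : Fin m) (η : Fin 2 → ℝ),
            |(∑ j, w j * Real.log (1 + Real.exp (-Y i j * (β j ⬝ᵥ η)))) -
                ∑ j, Real.log (1 + Real.exp (-Y i j * (β j ⬝ᵥ η)))| ≤
              ε * ∑ j, Real.log (1 + Real.exp (-Y i j * (β j ⬝ᵥ η))) := by
  obtain ⟨C, hC, hcoreset⟩ := stmt0_general 2
  refine ⟨C, hC, fun n m hn hm β Y hY μ ε hμ hε hε_half hβ => ?_⟩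
  have : Nonempty (Fin n) := Fin.pos_iff_nonempty.1 (by omega)
  have : Nonempty (Fin m) := Fin.pos_iff_nonempty.1 (by omega)
  obtain ⟨w, hw, hsupp, herr⟩ := hcoreset _ _ β Y hY μ ε hμ hε hε_half.le hβ
  refine ⟨w, hw, hsupp.trans ?_, herr⟩
  rw [Fintype.card_fin, mul_assoc, mul_assoc]
  refine mul_le_mul_of_nonneg_left ?_ hC.le
  refine (div_sq_mul_log_mul_div_le hm hμ hε (by linarith)).trans ?_
  gcongr
  exact le_add_of_nonneg_left (by positivity)
end

section
/- Let X ∈ ℝ^{m×d} with rows x_1,…,x_m, let I', I'' partition [m], and let c_i ∈ [0,1/2) for each i. Define the 3PL loss f(Xη) = ∑_{i∈I'} g_{c_i}(x_i·η) + ∑_{i∈I''} h_{c_i}(x_i·η), and let X' be the submatrix with rows indexed by I'. Let μ ≥ 1 and assume: (a) for all η ∈ ℝ^d, ‖Xη‖₁ ≤ (1+μ)·‖(Xη)⁺‖₁; (b) for all η ∈ ℝ^d, ‖(Xη)⁺‖₁ ≤ (1+μ)·‖(X'η)⁺‖₁; (c) σ_min^{(1)}(X) := inf_{v ≠ 0}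 ‖Xv‖₁/‖v‖₁ > 0. Let ε ∈ (0,1/2) and let η_opt, η_core ∈ ℝ^d satisfy f(X·η_core) ≤ (1+3ε)·f(X·η_opt). Then ‖η_opt − η_core‖₁ ≤ ((1+μ)²·(2+3ε)/σ_min^{(1)}(X))·f(X·η_opt). -/
open Finset Matrix

/-- `g_c(z) = ln(1+e^z) - ln(1-c)`. -/
noncomputable def gfun (c z : ℝ) : ℝ := Real.log (1 + Real.exp z) - Real.log (1 - c)

/-- `h_c(z) = -ln(c + (1-c)/(1+e^{-z}))`. -/
noncomputable def hfun (c z : ℝ) : ℝ := -Real.log (c + (1 - c) / (1 + Real.exp (-z)))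

/-!
The loss dominates the positive part of `x_i · η` on `I'`, because `g_c(z) ≥ max(z, 0)`, and is
nonnegative on `I''`. Chaining the two `μ`-conditions therefore gives `‖Xη‖₁ ≤ (1+μ)² f(Xη)` for
every `η`. Applying this to `η_opt` and to `η_core`, the triangle inequality and the approximation
guarantee bound `‖X(η_opt - η_core)‖₁` by `(1+μ)² (2+3ε) f(Xη_opt)`, and `σ ‖v‖₁ ≤ ‖Xv‖₁` turns
this into the bound on the parameters.
-/

lemma posPart_le_log_one_add_exp (z : ℝ) : z⁺ ≤ Real.log (1 + Real.exp z) := by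
  have hexp : 0 < Real.exp z := Real.exp_pos z
  refine sup_le ?_ ?_
  · exact (Real.le_log_iff_exp_le (by positivity)).mpr (by linarith)
  · exact Real.log_nonneg (by linarith)

lemma posPart_le_gfun {c : ℝ} (hc₀ : 0 ≤ c) (hc₁ : c < 1) (z : ℝ) : z⁺ ≤ gfun c z := by
  have hlog : Real.log (1 - c) ≤ 0 := Real.log_nonpos (by linarith) (by linarith)
  unfold gfun
  linarith [posPart_le_log_one_add_exp z]

lemma hfun_nonneg {c : ℝ} (hc₀ : 0 ≤ c) (hc₁ : c ≤ 1) (z : ℝ) : 0 ≤ hfun c z := by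
  have hfrac₀ : 0 ≤ (1 - c) / (1 + Real.exp (-z)) := div_nonneg (by linarith) (by positivity)
  have hfrac₁ : (1 - c) / (1 + Real.exp (-z)) ≤ 1 - c :=
    div_le_self (by linarith) (by linarith [Real.exp_pos (-z)])
  exact neg_nonneg.mpr (Real.log_nonpos (by linarith) (by linarith))

lemma sum_filter_nonneg_eq_sum_posPart {ι α : Type*} [AddCommGroup α] [LinearOrder α]
    (s : Finset ι) (z : ι → α) :
    ∑ i ∈ s with 0 ≤ z i, z i = ∑ i ∈ s, (z i)⁺ := by
  simp only [Finset.sum_filter, posPart_eq_ite]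

section Loss

variable {ι : Type*}

/-- The 3PL loss `f` as a function of the vector `z = Xη`. The rows in `I'` are
charged through `g` and those in `I''` through `h`. -/
noncomputable def threePLLoss (c : ι → ℝ) (I' I'' : Finset ι) (z : ι → ℝ) : ℝ :=
  (∑ i ∈ I', gfun (c i) (z i)) + ∑ i ∈ I'', hfun (c i) (z i)

lemma sum_posPart_le_threePLLoss {c : ι → ℝ} (hc : ∀ i, 0 ≤ c i ∧ c i < 1)
    (I' I'' : Finset ι) (z : ι → ℝ) : ∑ i ∈ I', (z i)⁺ ≤ threePLLoss c I' I'' z := by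
  have hg : ∑ i ∈ I', (z i)⁺ ≤ ∑ i ∈ I', gfun (c i) (z i) :=
    sum_le_sum fun i _ => posPart_le_gfun (hc i).1 (hc i).2 (z i)
  have hh : 0 ≤ ∑ i ∈ I'', hfun (c i) (z i) :=
    sum_nonneg fun i _ => hfun_nonneg (hc i).1 (hc i).2.le (z i)
  exact le_add_of_le_of_nonneg hg hh

lemma sum_abs_le_sq_mul_threePLLoss [Fintype ι] {c : ι → ℝ} (hc : ∀ i, 0 ≤ c i ∧ c i < 1)
    {I' : Finset ι} (I'' : Finset ι) {K : ℝ} {z : ι → ℝ}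
    (habs : ∑ i, |z i| ≤ K * ∑ i, (z i)⁺)
    (hpos : ∑ i, (z i)⁺ ≤ K * ∑ i ∈ I', (z i)⁺) :
    ∑ i, |z i| ≤ K ^ 2 * threePLLoss c I' I'' z := by
  have hsum_nonneg (s : Finset ι) : 0 ≤ ∑ i ∈ s, (z i)⁺ :=
    sum_nonneg fun i _ => posPart_nonneg (z i)
  calc ∑ i, |z i|
      ≤ |K| * ∑ i, (z i)⁺ :=
        habs.trans (mul_le_mul_of_nonneg_right (le_abs_self K) (hsum_nonneg univ))
    _ ≤ |K| * (|K| * ∑ i ∈ I', (z i)⁺) := by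
        gcongr
        exact hpos.trans (mul_le_mul_of_nonneg_right (le_abs_self K) (hsum_nonneg I'))
    _ = K ^ 2 * ∑ i ∈ I', (z i)⁺ := by rw [← mul_assoc, abs_mul_abs_self, sq]
    _ ≤ K ^ 2 * threePLLoss c I' I'' z := by
        gcongr
        exact sum_posPart_le_threePLLoss hc I' I'' z

end Loss

section Recovery

variable {ι κ : Type*} [Fintype ι] [Fintype κ]

/-- `σ_min^{(1)}(X)`, the smallest factor by which the matrix with rows `X i` scales the `ℓ¹`-norm
of a nonzero vector. It is `0` when there is no nonzero vector, i.e. when `κ` is empty. -/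
noncomputable def l1MinGain (X : ι → κ → ℝ) : ℝ :=
  sInf ((fun v : κ → ℝ => (∑ i, |X i ⬝ᵥ v|) / ∑ k, |v k|) '' {v | v ≠ 0})

lemma l1MinGain_mul_sum_abs_le (X : ι → κ → ℝ) (v : κ → ℝ) :
    l1MinGain X * ∑ k, |v k| ≤ ∑ i, |X i ⬝ᵥ v| := by
  rcases eq_or_ne v 0 with rfl | hv
  · simp
  · have hv_pos : 0 < ∑ k, |v k| := by
      obtain ⟨k, hk⟩ := Function.ne_iff.mp hv
      exact sum_pos' (fun _ _ => abs_nonneg _) ⟨k, mem_univ k, abs_pos.mpr hk⟩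
    refine (le_div_iff₀ hv_pos).mp (csInf_le ⟨0, ?_⟩ ⟨v, hv, rfl⟩)
    rintro _ ⟨w, -, rfl⟩
    positivity

lemma sum_abs_dotProduct_sub_le (X : ι → κ → ℝ) (v w : κ → ℝ) :
    ∑ i, |X i ⬝ᵥ (v - w)| ≤ ∑ i, |X i ⬝ᵥ v| + ∑ i, |X i ⬝ᵥ w| := by
  rw [← sum_add_distrib]
  gcongr with i
  rw [dotProduct_sub]
  exact abs_sub _ _

theorem stmt4_general (X : ι → κ → ℝ) (I' I'' : Finset ι)
    (c : ι → ℝ) (hc : ∀ i, 0 ≤ c i ∧ c i < 1) (μ : ℝ)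
    (habs : ∀ η : κ → ℝ, ∑ i, |X i ⬝ᵥ η| ≤ (1 + μ) * ∑ i, (X i ⬝ᵥ η)⁺)
    (hpos : ∀ η : κ → ℝ, ∑ i, (X i ⬝ᵥ η)⁺ ≤ (1 + μ) * ∑ i ∈ I', (X i ⬝ᵥ η)⁺)
    (hgain : 0 < l1MinGain X) (ε : ℝ) (ηopt ηcore : κ → ℝ)
    (hcore : threePLLoss c I' I'' (X · ⬝ᵥ ηcore) ≤
      (1 + 3 * ε) * threePLLoss c I' I'' (X · ⬝ᵥ ηopt)) :
    ∑ k, |ηopt k - ηcore k| ≤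
      ((1 + μ) ^ 2 * (2 + 3 * ε) / l1MinGain X) * threePLLoss c I' I'' (X · ⬝ᵥ ηopt) := by
  have hloss (η : κ → ℝ) :
      ∑ i, |X i ⬝ᵥ η| ≤ (1 + μ) ^ 2 * threePLLoss c I' I'' (X · ⬝ᵥ η) :=
    sum_abs_le_sq_mul_threePLLoss hc I'' (habs η) (hpos η)
  rw [div_mul_eq_mul_div, le_div_iff₀' hgain]
  calc l1MinGain X * ∑ k, |ηopt k - ηcore k|
      ≤ ∑ i, |X i ⬝ᵥ (ηopt - ηcore)| := l1MinGain_mul_sum_abs_le X (ηopt - ηcore)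
    _ ≤ ∑ i, |X i ⬝ᵥ ηopt| + ∑ i, |X i ⬝ᵥ ηcore| := sum_abs_dotProduct_sub_le X ηopt ηcore
    _ ≤ (1 + μ) ^ 2 * threePLLoss c I' I'' (X · ⬝ᵥ ηopt) +
          (1 + μ) ^ 2 * ((1 + 3 * ε) * threePLLoss c I' I'' (X · ⬝ᵥ ηopt)) := by
        gcongr
        · exact hloss ηopt
        · exact (hloss ηcore).trans (by gcongr)
    _ = (1 + μ) ^ 2 * (2 + 3 * ε) * threePLLoss c I' I'' (X · ⬝ᵥ ηopt) := by ring

end Recovery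

/-- Parameter recovery guarantee for the 3PL loss
`f(Xη) = ∑_{i∈I'} g_{c_i}(x_i·η) + ∑_{i∈I''} h_{c_i}(x_i·η)`. -/
theorem stmt4 {m d : ℕ} (X : Fin m → Fin d → ℝ)
    (I' I'' : Finset (Fin m)) (hdisj : Disjoint I' I'') (hcover : I' ∪ I'' = Finset.univ)
    (c : Fin m → ℝ) (hc : ∀ i, 0 ≤ c i ∧ c i < 1 / 2)
    (μ : ℝ) (hμ : 1 ≤ μ)
    (ha : ∀ η : Fin d → ℝ,
      ∑ i, |X i ⬝ᵥ η| ≤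
        (1 + μ) * ∑ i ∈ Finset.univ.filter (fun i => 0 ≤ X i ⬝ᵥ η), X i ⬝ᵥ η)
    (hb : ∀ η : Fin d → ℝ,
      ∑ i ∈ Finset.univ.filter (fun i => 0 ≤ X i ⬝ᵥ η), X i ⬝ᵥ η ≤
        (1 + μ) * ∑ i ∈ I'.filter (fun i => 0 ≤ X i ⬝ᵥ η), X i ⬝ᵥ η)
    (σ : ℝ)
    (hσ : σ = sInf ((fun v : Fin d → ℝ =>
      (∑ i, |X i ⬝ᵥ v|) / ∑ k, |v k|) '' {v | v ≠ 0}))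
    (hσpos : 0 < σ)
    (ε : ℝ) (hε0 : 0 < ε) (hε : ε < 1 / 2)
    (ηopt ηcore : Fin d → ℝ)
    (hcore :
      (∑ i ∈ I', gfun (c i) (X i ⬝ᵥ ηcore)) + ∑ i ∈ I'', hfun (c i) (X i ⬝ᵥ ηcore) ≤
        (1 + 3 * ε) *
          ((∑ i ∈ I', gfun (c i) (X i ⬝ᵥ ηopt)) +
            ∑ i ∈ I'', hfun (c i) (X i ⬝ᵥ ηopt))) :
    ∑ k, |ηopt k - ηcore k| ≤
      ((1 + μ) ^ 2 * (2 + 3 * ε) / σ) *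
        ((∑ i ∈ I', gfun (c i) (X i ⬝ᵥ ηopt)) +
          ∑ i ∈ I'', hfun (c i) (X i ⬝ᵥ ηopt)) := by
  simp only [sum_filter_nonneg_eq_sum_posPart] at ha hb
  subst hσ
  exact stmt4_general X I' I'' c (fun i => ⟨(hc i).1, (hc i).2.trans (by norm_num)⟩) μ ha hb hσpos ε
    ηopt ηcore hcore
end

section
/- Let μ₁ ≥ 1, let X' ∈ ℝ^{m'×2} with m' ≥ 1 and rows x'_1,…,x'_{m'} be μ₁-complex in the ℓ₁ sense, and let c_1,…,c_{m'} ∈ [0,1/2). Define f₁(X'β) = ∑_{i=1}^{m'} g_{c_i}(x'_i·β). If ℓ ∈ [m'] and β ∈ ℝ² satisfy x'_ℓ·β ≤ 1.005, then g_{c_ℓ}(x'_ℓ·β) ≤ (40 + (5/2)·μ₁)·(1/m')·f₁(X'β). -/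
open Finset Matrix

/-!
With `M = max 9 μ`, every summand at margin `z` is at least `gfun 0 z ≥ 1/M + (z⁺ - z⁻/μ)/2`.
Complexity, applied to `-β`, says that the corrections `z⁺ - z⁻/μ` have nonnegative sum, so the
average of the summands is at least `1/M`. A summand with `z ≤ log 3` and `c ≤ 1/2` is at most
`gfun (1/2) (log 3) = 3 log 2`, hence at most `3 M log 2 ≤ 40 + (5/2) μ` times the average.
-/

open Real

section ShiftedSoftplus

variable {c c' z z' μ : ℝ}

lemma gfun_zero_left (z : ℝ) : gfun 0 z = log (1 + exp z) := by
  simp [gfun]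

lemma gfun_le_gfun (hcc' : c ≤ c') (hc' : c' < 1) (hzz' : z ≤ z') : gfun c z ≤ gfun c' z' := by
  have : 0 < 1 - c' := sub_pos.2 hc'
  unfold gfun
  gcongr

lemma gfun_half_log_three : gfun (1 / 2) (log 3) = 3 * log 2 := by
  have log_four : log 4 = 2 * log 2 := by
    rw [show (4 : ℝ) = 2 ^ 2 by norm_num, log_pow, Nat.cast_ofNat]
  have log_half : log (1 - 1 / 2) = -log 2 := by
    rw [← log_inv]; norm_num
  rw [gfun, exp_log (by norm_num), log_half, show (1 + 3 : ℝ) = 4 by norm_num, log_four]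
  ring

lemma gfun_le_three_mul_log_two (hc : c ≤ 1 / 2) (hz : z ≤ log 3) : gfun c z ≤ 3 * log 2 :=
  (gfun_le_gfun hc (by norm_num) hz).trans_eq gfun_half_log_three

lemma le_gfun_zero_left (z : ℝ) : z ≤ gfun 0 z := by
  rw [gfun_zero_left, le_log_iff_exp_le (by positivity)]
  linarith

lemma gfun_zero_left_nonneg (z : ℝ) : 0 ≤ gfun 0 z := by
  rw [gfun_zero_left]
  exact log_nonneg (by linarith [exp_pos z])

lemma log_two_le_gfun_zero_left (hz : 0 ≤ z) : log 2 ≤ gfun 0 z := by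
  rw [gfun_zero_left]
  exact log_le_log (by norm_num) (by linarith [one_le_exp hz])

lemma one_div_nine_le_gfun_zero_left (hz : -2 ≤ z) : 1 / 9 ≤ gfun 0 z := by
  have exp_ge : 1 / 8 ≤ exp z := calc
    1 / 8 ≤ exp (-1) ^ 2 := by nlinarith [exp_neg_one_gt_d9]
    _ = exp (-2) := by rw [← exp_nat_mul]; norm_num
    _ ≤ exp z := exp_le_exp.2 hz
  calc 1 / 9 = 1 - (1 + 1 / 8 : ℝ)⁻¹ := by norm_num
    _ ≤ 1 - (1 + exp z)⁻¹ := by gcongr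
    _ ≤ gfun 0 z := gfun_zero_left z ▸ one_sub_inv_le_log_of_pos (by positivity)

lemma inv_max_add_le_gfun_zero_left (hμ : 0 < μ) (z : ℝ) :
    (max 9 μ)⁻¹ + (z⁺ - z⁻ / μ) / 2 ≤ gfun 0 z := by
  have inv_le_ninth : (max 9 μ)⁻¹ ≤ 1 / 9 :=
    (inv_anti₀ (by norm_num) (le_max_left 9 μ)).trans_eq (by norm_num)
  have inv_le_inv : (max 9 μ)⁻¹ ≤ 1 / μ :=
    (inv_anti₀ hμ (le_max_right 9 μ)).trans_eq (one_div μ).symm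
  obtain nonneg | neg := le_or_gt 0 z
  · rw [posPart_of_nonneg nonneg, negPart_of_nonneg nonneg, zero_div]
    linarith [le_gfun_zero_left z, log_two_le_gfun_zero_left nonneg, log_two_gt_d9]
  rw [posPart_of_nonpos neg.le, negPart_of_nonpos neg.le]
  obtain near | far := le_or_gt (-2) z
  · have : 0 ≤ -z / μ := div_nonneg (neg_nonneg.2 neg.le) hμ.le
    linarith [one_div_nine_le_gfun_zero_left near]
  · have : 1 / μ ≤ -z / μ / 2 := by
      rw [div_right_comm]
      gcongr
      linarith
    linarith [gfun_zero_left_nonneg z]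

lemma three_mul_log_two_mul_max_le (hμ : 0 ≤ μ) :
    3 * log 2 * max 9 μ ≤ 40 + 5 / 2 * μ := by
  have : 3 * log 2 ≤ 5 / 2 := by linarith [log_two_lt_d9]
  calc 3 * log 2 * max 9 μ ≤ 5 / 2 * max 9 μ := by gcongr
    _ ≤ 5 / 2 * (9 + μ) := by gcongr; exact max_le (by linarith) (by linarith)
    _ ≤ 40 + 5 / 2 * μ := by linarith

end ShiftedSoftplus

section Complexity

variable {ι : Type} [Fintype ι] {d : ℕ} {x : ι → Fin d → ℝ} {μ : ℝ}

lemma Mu1Complex.sum_negPart_le (hx : Mu1Complex x μ) (η : Fin d → ℝ) :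
    ∑ i, (x i ⬝ᵥ η)⁻ ≤ μ * ∑ i, (x i ⬝ᵥ η)⁺ := by
  have sum_pos : ∑ i with 0 < x i ⬝ᵥ η, |x i ⬝ᵥ η| = ∑ i, (x i ⬝ᵥ η)⁺ := calc
    _ = ∑ i with 0 < x i ⬝ᵥ η, x i ⬝ᵥ η :=
      sum_congr rfl fun i hi => abs_of_pos (mem_filter.1 hi).2
    _ = ∑ i, (x i ⬝ᵥ η)⁺ := by simp only [sum_filter, ← posPart_eq_ite_lt]
  have sum_neg : ∑ i with x i ⬝ᵥ η ≤ 0, -(x i ⬝ᵥ η) = ∑ i, (x i ⬝ᵥ η)⁻ := by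
    simp only [sum_filter, ← negPart_eq_ite]
  simpa only [dotProduct_neg, neg_nonneg, neg_lt_zero, abs_neg, sum_pos, sum_neg] using hx (-η)

lemma Mu1Complex.card_le_max_mul_sum_gfun (hx : Mu1Complex x μ) (hμ : 0 < μ) {c : ι → ℝ}
    (hc₀ : ∀ i, 0 ≤ c i) (hc₁ : ∀ i, c i < 1) (β : Fin d → ℝ) :
    (Fintype.card ι : ℝ) ≤ max 9 μ * ∑ i, gfun (c i) (x i ⬝ᵥ β) := by
  have correction_nonneg : 0 ≤ ∑ i, ((x i ⬝ᵥ β)⁺ - (x i ⬝ᵥ β)⁻ / μ) / 2 := by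
    rw [← sum_div, sum_sub_distrib, ← sum_div]
    exact div_nonneg (sub_nonneg.2 <| (div_le_iff₀' hμ).2 <| hx.sum_negPart_le β) zero_le_two
  have max_pos : 0 < max 9 μ := lt_max_of_lt_right hμ
  rw [← inv_mul_le_iff₀ max_pos]
  calc (max 9 μ)⁻¹ * Fintype.card ι
      ≤ ∑ i, ((max 9 μ)⁻¹ + ((x i ⬝ᵥ β)⁺ - (x i ⬝ᵥ β)⁻ / μ) / 2) := by
        rw [sum_add_distrib, sum_const, card_univ, nsmul_eq_mul, mul_comm]
        exact le_add_of_nonneg_right correction_nonneg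
    _ ≤ ∑ i, gfun 0 (x i ⬝ᵥ β) := sum_le_sum fun i _ => inv_max_add_le_gfun_zero_left hμ _
    _ ≤ ∑ i, gfun (c i) (x i ⬝ᵥ β) :=
        sum_le_sum fun i _ => gfun_le_gfun (hc₀ i) (hc₁ i) le_rfl

theorem stmt12_general (hx : Mu1Complex x μ) (hμ : 0 < μ) {c : ι → ℝ} (hc₀ : ∀ i, 0 ≤ c i)
    (hc₁ : ∀ i, c i < 1) {ℓ : ι} (hcℓ : c ℓ ≤ 1 / 2) {β : Fin d → ℝ} (hβ : x ℓ ⬝ᵥ β ≤ log 3) :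
    gfun (c ℓ) (x ℓ ⬝ᵥ β) ≤
      (40 + 5 / 2 * μ) * (1 / (Fintype.card ι : ℝ)) * ∑ i, gfun (c i) (x i ⬝ᵥ β) := by
  have : Nonempty ι := ⟨ℓ⟩
  have card_pos : (0 : ℝ) < Fintype.card ι := Nat.cast_pos.2 Fintype.card_pos
  have sum_gfun_nonneg : 0 ≤ ∑ i, gfun (c i) (x i ⬝ᵥ β) := sum_nonneg fun i _ =>
    (gfun_zero_left_nonneg _).trans (gfun_le_gfun (hc₀ i) (hc₁ i) le_rfl)
  rw [mul_one_div, div_mul_eq_mul_div, le_div_iff₀ card_pos]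
  calc gfun (c ℓ) (x ℓ ⬝ᵥ β) * Fintype.card ι
      ≤ 3 * log 2 * (max 9 μ * ∑ i, gfun (c i) (x i ⬝ᵥ β)) := by
        gcongr
        · exact gfun_le_three_mul_log_two hcℓ hβ
        · exact hx.card_le_max_mul_sum_gfun hμ hc₀ hc₁ β
    _ = 3 * log 2 * max 9 μ * ∑ i, gfun (c i) (x i ⬝ᵥ β) := by ring
    _ ≤ (40 + 5 / 2 * μ) * ∑ i, gfun (c i) (x i ⬝ᵥ β) := by
        gcongr
        exact three_mul_log_two_mul_max_le hμ.le

end Complexity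

/-- Sensitivity bound for the shifted logistic summands at indices with small margin:
if `x'_ℓ·β ≤ 1.005`, then `g_{c_ℓ}(x'_ℓ·β) ≤ (40 + (5/2)μ₁)·(1/m')·f₁(X'β)`. -/
theorem stmt12 {m' : ℕ} (hm : 1 ≤ m') (μ1 : ℝ) (hμ : 1 ≤ μ1)
    (X' : Fin m' → Fin 2 → ℝ) (hX' : Mu1Complex X' μ1)
    (c : Fin m' → ℝ) (hc : ∀ i, 0 ≤ c i ∧ c i < 1 / 2)
    (ℓ : Fin m') (β : Fin 2 → ℝ) (hβ : X' ℓ ⬝ᵥ β ≤ 1.005) :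
    gfun (c ℓ) (X' ℓ ⬝ᵥ β) ≤
      (40 + 5 / 2 * μ1) * (1 / (m' : ℝ)) * ∑ i, gfun (c i) (X' i ⬝ᵥ β) := by
  simpa only [Fintype.card_fin] using stmt12_general hX' (by linarith) (fun i => (hc i).1)
    (fun i => (hc i).2.trans one_half_lt_one) (hc ℓ).2.le (by linarith [log_three_gt_d9])
end
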